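/- Let f be an inner function with f(0)=0 and a=|f'(0)|<1. There exist constants C=C(f)>0 and q_0=q_0(f)>0 such that: for all 1 ≤ k ≤ q with q ≥ q_0, all signs ε_1,…,ε_k ∈ {1,−1}, and all positive integers n_1 < … < n_k with n_{j+1} − n_j > q for each j, one has |∫_{∂𝔻} ∏_{j=1}^k f^{ε_j n_j} dm| ≤ C^k · k! · a^{kq/4}. -/

import Mathlib

open MeasureTheory Set Metric Filter Complex

/-- Normalized Lebesgue (arc-length) measure on the unit circle, as a measure on ℂ. -/
noncomputable def m : Measure ℂ :=
  (ENNReal.ofReal (2 * Real.pi))⁻¹ •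
    (Measure.map (fun θ : ℝ => Complex.exp ((θ : ℂ) * Complex.I))
      (volume.restrict (Set.Ioc (0:ℝ) (2 * Real.pi))))

/-- `spow F ε n` is `F^[n]` if `ε = 1` and its complex conjugate if `ε = -1`. -/
noncomputable def spow (F : ℂ → ℂ) (ε : ℤ) (n : ℕ) (z : ℂ) : ℂ :=
  if ε = 1 then F^[n] z else (starRingEnd ℂ) (F^[n] z)


open scoped ComplexConjugate Topology

namespace InnerFunction

lemma measurable_expMap : Measurable fun θ : ℝ => Complex.exp ((θ : ℂ) * Complex.I) := by
  fun_prop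

instance isProbabilityMeasure_m : IsProbabilityMeasure m := by
  constructor
  have h : (0 : ℝ) < 2 * Real.pi := by positivity
  rw [m, Measure.smul_apply, Measure.map_apply measurable_expMap MeasurableSet.univ]
  simp only [preimage_univ, Measure.restrict_apply, MeasurableSet.univ, univ_inter, Real.volume_Ioc,
    sub_zero, smul_eq_mul]
  exact ENNReal.inv_mul_cancel (by simpa using h) ENNReal.ofReal_ne_top

lemma ae_norm_eq_one : ∀ᵐ z ∂m, ‖z‖ = 1 := by
  refine Measure.ae_smul_measure ?_ _
  rw [ae_map_iff measurable_expMap.aemeasurable (measurableSet_eq_fun (by fun_prop) (by fun_prop))]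
  exact ae_of_all _ fun θ => Complex.norm_exp_ofReal_mul_I θ

lemma m_restrict_sphere : m.restrict (sphere 0 1) = m :=
  Measure.restrict_eq_self_of_ae_mem (by filter_upwards [ae_norm_eq_one] with z hz; simpa using hz)

lemma aestronglyMeasurable_of_continuousOn {φ : ℂ → ℂ} (h : ContinuousOn φ (sphere 0 1)) :
    AEStronglyMeasurable φ m := by
  rw [← m_restrict_sphere]
  exact h.aestronglyMeasurable isClosed_sphere.measurableSet

lemma integral_m_eq_circleAverage {φ : ℂ → ℂ} (h : AEStronglyMeasurable φ m) :
    ∫ z, φ z ∂m = Real.circleAverage φ 0 1 := by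
  have h2 : (0 : ℝ) < 2 * Real.pi := by positivity
  have hac : Measure.map (fun θ : ℝ => Complex.exp ((θ : ℂ) * Complex.I))
      (volume.restrict (Set.Ioc (0 : ℝ) (2 * Real.pi))) ≪ m :=
    Measure.AbsolutelyContinuous.rfl.smul_right (by simp [ENNReal.mul_eq_top])
  rw [Real.circleAverage, m, integral_smul_measure,
    integral_map measurable_expMap.aemeasurable (h.mono_ac hac),
    intervalIntegral.integral_of_le h2.le, ENNReal.toReal_inv, ENNReal.toReal_ofReal h2.le]
  simp [circleMap]

/-- The Cauchy kernel `1 / (1 - z̄ w)`. -/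
noncomputable def cauchyKernel (w z : ℂ) : ℂ := (1 - conj z * w)⁻¹

lemma one_sub_conj_mul_ne_zero {w z : ℂ} (hw : ‖w‖ < 1) (hz : ‖z‖ = 1) : 1 - conj z * w ≠ 0 := by
  intro h
  have : ‖conj z * w‖ = 1 := by rw [← sub_eq_zero.1 h]; simp
  rw [norm_mul, RCLike.norm_conj, hz, one_mul] at this
  linarith

lemma continuousOn_cauchyKernel {w : ℂ} (hw : ‖w‖ < 1) :
    ContinuousOn (cauchyKernel w) (sphere 0 1) := by
  unfold cauchyKernel
  refine ContinuousOn.inv₀ (by fun_prop) fun z hz => one_sub_conj_mul_ne_zero hw (by simpa using hz)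

lemma norm_cauchyKernel_le {w z : ℂ} (hw : ‖w‖ < 1) (hz : ‖z‖ = 1) :
    ‖cauchyKernel w z‖ ≤ (1 - ‖w‖)⁻¹ := by
  rw [cauchyKernel, norm_inv]
  refine inv_anti₀ (by linarith) ?_
  have := norm_sub_norm_le (1 : ℂ) (conj z * w)
  rw [norm_mul, RCLike.norm_conj, hz, one_mul, norm_one] at this
  exact this

lemma measurable_cauchyKernel (w : ℂ) : Measurable (cauchyKernel w) := by
  unfold cauchyKernel
  have : Measurable fun z : ℂ => conj z := Complex.continuous_conj.measurable
  fun_prop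

lemma diffContOnCl_comp_mul {g : ℂ → ℂ} (hg : DifferentiableOn ℂ g (ball 0 1)) {ρ : ℝ}
    (hρ0 : 0 ≤ ρ) (hρ1 : ρ < 1) : DiffContOnCl ℂ (fun z => g (ρ * z)) (ball 0 1) := by
  have hd : DifferentiableOn ℂ (fun z => g (ρ * z)) (closedBall 0 1) := by
    refine hg.comp (by fun_prop) fun z hz => ?_
    simp only [mem_ball, dist_zero_right, norm_mul, Complex.norm_real, Real.norm_eq_abs,
      abs_of_nonneg hρ0, mem_closedBall] at hz ⊢
    nlinarith [norm_nonneg z]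
  refine ⟨hd.mono ball_subset_closedBall, ?_⟩
  rw [closure_ball _ one_ne_zero]
  exact hd.continuousOn

lemma integral_cauchyKernel_mul_of_diffContOnCl {g : ℂ → ℂ} (hg : DiffContOnCl ℂ g (ball 0 1))
    {w : ℂ} (hw : ‖w‖ < 1) :
    ∫ z, cauchyKernel w z * g z ∂m = g w ∧ ∫ z, conj (cauchyKernel w z) * g z ∂m = g 0 := by
  have hgc : ContinuousOn g (closedBall 0 1) := by
    have := hg.2
    rwa [closure_ball _ one_ne_zero] at this
  have hgs := hgc.mono (sphere_subset_closedBall (x := (0 : ℂ)) (ε := 1))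
  constructor
  · rw [integral_m_eq_circleAverage (aestronglyMeasurable_of_continuousOn
      (φ := fun z => cauchyKernel w z * g z) ((continuousOn_cauchyKernel hw).mul hgs)),
      ← DiffContOnCl.circleAverage_smul_div (f := g) (R := 1) (c := 0) (w := w) (by simpa using hg)
        (by simpa using hw)]
    refine Real.circleAverage_congr_sphere fun z hz => ?_
    have hz1 : ‖z‖ = 1 := by simpa using hz
    have hz0 : z ≠ 0 := by rintro rfl; simp at hz1
    have hzw : z - w ≠ 0 := by rintro h; rw [sub_eq_zero.1 h] at hz1; linarith
    have hcz : conj z = z⁻¹ := by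
      rw [Complex.inv_def, Complex.normSq_eq_norm_sq, hz1]; simp
    simp only [cauchyKernel, hcz, sub_zero, smul_eq_mul]
    congr 1
    field_simp
  · have hne : ∀ z ∈ closedBall (0 : ℂ) 1, 1 - z * conj w ≠ 0 := by
      intro z hz h
      have h1 : ‖z * conj w‖ = 1 := by rw [← sub_eq_zero.1 h]; simp
      rw [norm_mul, RCLike.norm_conj] at h1
      have hz' : ‖z‖ ≤ 1 := by simpa using hz
      nlinarith [norm_nonneg z, norm_nonneg w]
    have hd : DiffContOnCl ℂ (fun z => (1 - z * conj w)⁻¹ * g z) (ball 0 1) := by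
      have h1 : DifferentiableOn ℂ (fun z => (1 - z * conj w)⁻¹) (closedBall 0 1) :=
        DifferentiableOn.inv (by fun_prop) hne
      refine ⟨(h1.mono ball_subset_closedBall).mul hg.1, ?_⟩
      rw [closure_ball _ one_ne_zero]
      exact h1.continuousOn.mul hgc
    have heq : ∀ z, conj (cauchyKernel w z) * g z = (1 - z * conj w)⁻¹ * g z := by
      intro z; simp [cauchyKernel]
    simp only [heq]
    rw [integral_m_eq_circleAverage (aestronglyMeasurable_of_continuousOn ?_),
      DiffContOnCl.circleAverage (by simpa using hd)]
    · simp
    · have := hd.2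
      rw [closure_ball _ one_ne_zero] at this
      exact this.mono sphere_subset_closedBall

/-- Cauchy's formula for a bounded holomorphic function with radial boundary values. -/
lemma integral_cauchyKernel_mul_boundary {g b : ℂ → ℂ} (hg : DifferentiableOn ℂ g (ball 0 1))
    (hbound : ∀ z ∈ ball (0 : ℂ) 1, ‖g z‖ ≤ 1)
    (hb : ∀ᵐ z ∂m, Tendsto (fun r : ℝ => g (r * z)) (𝓝[<] 1) (nhds (b z)))
    {w : ℂ} (hw : ‖w‖ < 1) :
    ∫ z, cauchyKernel w z * b z ∂m = g w ∧ ∫ z, conj (cauchyKernel w z) * b z ∂m = g 0 := by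
  have hev : ∀ᶠ r : ℝ in 𝓝[<] 1, 0 ≤ r ∧ r < 1 := by
    filter_upwards [Ioo_mem_nhdsLT (zero_lt_one (α := ℝ))] with r hr
    exact ⟨hr.1.le, hr.2⟩
  have hmem : ∀ r : ℝ, 0 ≤ r → r < 1 → ∀ z : ℂ, ‖z‖ ≤ 1 → (r : ℂ) * z ∈ ball (0 : ℂ) 1 := by
    intro r h0 h1 z hz
    simp only [mem_ball, dist_zero_right, norm_mul, Complex.norm_real, Real.norm_eq_abs,
      abs_of_nonneg h0]
    nlinarith [norm_nonneg z]
  have key : ∀ K : ℂ → ℂ, ContinuousOn K (sphere 0 1) →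
      (∀ z : ℂ, ‖z‖ = 1 → ‖K z‖ ≤ (1 - ‖w‖)⁻¹) →
      Tendsto (fun r : ℝ => ∫ z, K z * g (r * z) ∂m) (𝓝[<] 1) (nhds (∫ z, K z * b z ∂m)) := by
    intro K hK hKb
    refine tendsto_integral_filter_of_dominated_convergence (fun _ => (1 - ‖w‖)⁻¹) ?_ ?_
      (integrable_const _) ?_
    · filter_upwards [hev] with r hr
      refine aestronglyMeasurable_of_continuousOn (hK.mul ?_)
      have := (diffContOnCl_comp_mul hg hr.1 hr.2).2
      rw [closure_ball _ one_ne_zero] at this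
      exact this.mono sphere_subset_closedBall
    · filter_upwards [hev] with r hr
      filter_upwards [ae_norm_eq_one] with z hz
      rw [norm_mul]
      have h1 := hbound _ (hmem r hr.1 hr.2 z hz.le)
      have h2 := hKb z hz
      have : 0 ≤ (1 - ‖w‖)⁻¹ := inv_nonneg.2 (by linarith)
      nlinarith [norm_nonneg (g (r * z)), norm_nonneg (K z)]
    · filter_upwards [hb] with z hz
      exact hz.const_mul _
  have hlim : ∀ v : ℂ, ‖v‖ < 1 → Tendsto (fun r : ℝ => g (r * v)) (𝓝[<] 1) (nhds (g v)) := by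
    intro v hv
    have hc : ContinuousAt g v :=
      (hg.differentiableAt (isOpen_ball.mem_nhds (by simpa using hv))).continuousAt
    have : Tendsto (fun r : ℝ => (r : ℂ) * v) (𝓝[<] 1) (nhds v) := by
      have : ContinuousAt (fun r : ℝ => (r : ℂ) * v) 1 := by fun_prop
      have h2 := this.tendsto
      simp only [Complex.ofReal_one, one_mul] at h2
      exact h2.mono_left nhdsWithin_le_nhds
    exact hc.tendsto.comp this
  constructor
  · refine tendsto_nhds_unique (key _ (continuousOn_cauchyKernel hw)
      fun z hz => norm_cauchyKernel_le hw hz) ((hlim w hw).congr' ?_)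
    filter_upwards [hev] with r hr
    exact (integral_cauchyKernel_mul_of_diffContOnCl (diffContOnCl_comp_mul hg hr.1 hr.2) hw).1.symm
  · refine tendsto_nhds_unique (key (fun z => conj (cauchyKernel w z))
      (Complex.continuous_conj.comp_continuousOn (continuousOn_cauchyKernel hw))
      fun z hz => by simpa using norm_cauchyKernel_le hw hz) ((hlim 0 (by simp)).congr' ?_)
    filter_upwards [hev] with r hr
    exact (integral_cauchyKernel_mul_of_diffContOnCl (diffContOnCl_comp_mul hg hr.1 hr.2) hw).2.symm

/-- A finite measure carried by the unit circle is determined by its nonnegative moments. -/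
lemma measure_ext_of_moments {μ ν : Measure ℂ} [IsFiniteMeasure μ] [IsFiniteMeasure ν]
    (hμ : ∀ᵐ z ∂μ, ‖z‖ = 1) (hν : ∀ᵐ z ∂ν, ‖z‖ = 1)
    (h : ∀ a : ℕ, ∫ z, z ^ a ∂μ = ∫ z, z ^ a ∂ν) : μ = ν := by
  have hpow : ∀ z : ℂ, ‖z‖ = 1 → ∀ a b : ℕ, z ^ (a + b) * conj z ^ b = z ^ a := by
    intro z hz a b
    rw [pow_add, mul_assoc, ← mul_pow, Complex.mul_conj, Complex.normSq_eq_norm_sq, hz]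
    simp
  have hmix : ∀ a b : ℕ, ∫ z, z ^ a * conj z ^ b ∂μ = ∫ z, z ^ a * conj z ^ b ∂ν := by
    have hge : ∀ a b : ℕ, ∫ z, z ^ (a + b) * conj z ^ b ∂μ = ∫ z, z ^ (a + b) * conj z ^ b ∂ν := by
      intro a b
      rw [integral_congr_ae (hμ.mono fun z hz => hpow z hz a b),
        integral_congr_ae (hν.mono fun z hz => hpow z hz a b), h]
    intro a b
    rcases le_total b a with hab | hab
    · obtain ⟨c, rfl⟩ := Nat.exists_eq_add_of_le hab
      rw [add_comm b c]
      exact hge c b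
    · obtain ⟨c, rfl⟩ := Nat.exists_eq_add_of_le hab
      have := congrArg conj (hge c a)
      rw [← integral_conj, ← integral_conj] at this
      simpa [mul_comm, add_comm] using this
  refine Measure.ext_of_charFun (funext fun t => ?_)
  set T : ℕ → ℂ → ℂ := fun n x => ((inner ℝ x t : ℝ) * Complex.I) ^ n / n.factorial with hT
  have hTbound : ∀ n : ℕ, ∀ x : ℂ, ‖x‖ = 1 → ‖T n x‖ ≤ ‖t‖ ^ n / n.factorial := by
    intro n x hx
    simp only [hT, norm_div, norm_pow, norm_mul, Complex.norm_real, Complex.norm_I, mul_one,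
      Complex.norm_natCast]
    gcongr
    have := norm_inner_le_norm (𝕜 := ℝ) x t
    rwa [hx, one_mul] at this
  have hTcont : ∀ n, Continuous (T n) := by intro n; simp only [hT]; fun_prop
  have hexp : ∀ ρ : Measure ℂ, IsFiniteMeasure ρ → (∀ᵐ z ∂ρ, ‖z‖ = 1) →
      HasSum (fun n => ∫ x, T n x ∂ρ) (charFun ρ t) := by
    intro ρ _ hρ
    have hint : ∀ n, Integrable (T n) ρ := fun n =>
      Integrable.of_bound (hTcont n).aestronglyMeasurable _ (hρ.mono fun x hx => hTbound n x hx)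
    have hsum : Summable fun n => ∫ x, ‖T n x‖ ∂ρ := by
      refine Summable.of_nonneg_of_le (fun n => integral_nonneg fun x => norm_nonneg _)
        (fun n => ?_) ((Real.summable_pow_div_factorial ‖t‖).mul_right (ρ.real univ))
      calc ∫ x, ‖T n x‖ ∂ρ ≤ ∫ _, ‖t‖ ^ n / n.factorial ∂ρ :=
            integral_mono_ae (hint n).norm (integrable_const _) (hρ.mono fun x hx => hTbound n x hx)
        _ = ‖t‖ ^ n / n.factorial * ρ.real univ := by simp [mul_comm]
    have := hasSum_integral_of_summable_integral_norm hint hsum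
    suffices hcf : charFun ρ t = ∫ x, ∑' n, T n x ∂ρ by rwa [hcf]
    rw [charFun_apply]
    refine integral_congr_ae (ae_of_all _ fun x => ?_)
    rw [Complex.exp_eq_exp_ℂ]
    exact (NormedSpace.expSeries_div_hasSum_exp _).tsum_eq.symm
  refine (hexp μ inferInstance hμ).unique ?_
  convert hexp ν inferInstance hν using 2 with n
  have hTn : ∀ x, T n x = ∑ j ∈ Finset.range (n + 1),
      ((conj t) ^ j * t ^ (n - j) * (n.choose j) * (Complex.I / 2) ^ n / n.factorial) *
        (x ^ j * conj x ^ (n - j)) := by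
    intro x
    have hin : ((inner ℝ x t : ℝ) : ℂ) = (x * conj t + conj x * t) / 2 := by
      rw [Complex.inner]
      rw [Complex.re_eq_add_conj]
      simp
      ring
    simp only [hT, hin]
    rw [show (x * conj t + conj x * t) / 2 * Complex.I
      = (x * conj t + conj x * t) * (Complex.I / 2) by ring, mul_pow, add_pow, Finset.sum_mul,
      Finset.sum_div]
    refine Finset.sum_congr rfl fun j _ => ?_
    rw [mul_pow, mul_pow]
    ring
  simp only [hTn]
  have hint : ∀ ρ : Measure ℂ, IsFiniteMeasure ρ → (∀ᵐ z ∂ρ, ‖z‖ = 1) → ∀ a b : ℕ,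
      Integrable (fun x : ℂ => x ^ a * conj x ^ b) ρ := by
    intro ρ _ hρ a b
    refine Integrable.of_bound (C := 1) ?_ (hρ.mono fun x hx => by simp [hx])
    have : Continuous fun x : ℂ => conj x := Complex.continuous_conj
    exact Continuous.aestronglyMeasurable (by fun_prop)
  rw [integral_finsetSum _ fun j _ => (hint μ inferInstance hμ _ _).const_mul _,
    integral_finsetSum _ fun j _ => (hint ν inferInstance hν _ _).const_mul _]
  refine Finset.sum_congr rfl fun j _ => ?_
  rw [integral_const_mul, integral_const_mul, hmix]

/-- The nonnegative kernel `Re (1 / (1 - z̄ w))`, an affine image of the Poisson kernel. -/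
noncomputable def reKernel (w z : ℂ) : ℝ := (cauchyKernel w z).re

lemma measurable_reKernel (w : ℂ) : Measurable (reKernel w) :=
  Complex.measurable_re.comp (measurable_cauchyKernel w)

lemma reKernel_nonneg {w z : ℂ} (hw : ‖w‖ < 1) (hz : ‖z‖ = 1) : 0 ≤ reKernel w z := by
  rw [reKernel, cauchyKernel, Complex.inv_re]
  refine div_nonneg ?_ (Complex.normSq_nonneg _)
  have := (Complex.re_le_norm (conj z * w))
  rw [norm_mul, RCLike.norm_conj, hz, one_mul] at this
  simp only [Complex.sub_re, Complex.one_re]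
  linarith

lemma abs_reKernel_le {w z : ℂ} (hw : ‖w‖ < 1) (hz : ‖z‖ = 1) :
    |reKernel w z| ≤ (1 - ‖w‖)⁻¹ :=
  (Complex.abs_re_le_norm _).trans (norm_cauchyKernel_le hw hz)

lemma reKernel_eq (w z : ℂ) :
    (reKernel w z : ℂ) = (cauchyKernel w z + conj (cauchyKernel w z)) / 2 :=
  Complex.re_eq_add_conj _

lemma reKernel_zero (z : ℂ) : reKernel 0 z = 1 := by simp [reKernel, cauchyKernel]

lemma integrable_reKernel {w : ℂ} (hw : ‖w‖ < 1) : Integrable (reKernel w) m :=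
  Integrable.of_bound (measurable_reKernel w).aestronglyMeasurable _
    (ae_norm_eq_one.mono fun _ hz => abs_reKernel_le hw hz)

/-- The measure with density `reKernel w` with respect to `m`. -/
noncomputable def kernelMeasure (w : ℂ) : Measure ℂ :=
  m.withDensity fun z => ENNReal.ofReal (reKernel w z)

lemma isFiniteMeasure_kernelMeasure {w : ℂ} (hw : ‖w‖ < 1) : IsFiniteMeasure (kernelMeasure w) :=
  isFiniteMeasure_withDensity_ofReal (integrable_reKernel hw).2

lemma kernelMeasure_zero : kernelMeasure 0 = m := by
  simp [kernelMeasure, reKernel_zero]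

lemma integral_kernelMeasure {w : ℂ} (hw : ‖w‖ < 1) (G : ℂ → ℂ) :
    ∫ z, G z ∂kernelMeasure w = ∫ z, reKernel w z * G z ∂m := by
  rw [kernelMeasure, integral_withDensity_eq_integral_toReal_smul
    (measurable_reKernel w).ennreal_ofReal (ae_of_all _ fun _ => ENNReal.ofReal_lt_top)]
  refine integral_congr_ae (ae_norm_eq_one.mono fun z hz => ?_)
  simp [ENNReal.toReal_ofReal (reKernel_nonneg hw hz)]

/-- A holomorphic self-map `f` of the disc fixing `0`, with measurable unimodular
radial boundary values `F`. -/
structure IsInnerPair (f F : ℂ → ℂ) : Prop where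
  differentiableOn : DifferentiableOn ℂ f (ball 0 1)
  mapsTo : MapsTo f (ball 0 1) (ball 0 1)
  map_zero : f 0 = 0
  measurable : Measurable F
  norm_eq_one : ∀ z, ‖F z‖ = 1
  boundary : ∀ᵐ z ∂m, Tendsto (fun r : ℝ => f (r * z)) (𝓝[<] 1) (𝓝 (F z))

lemma integral_reKernel_mul_boundary_pow {f F : ℂ → ℂ} (hf : DifferentiableOn ℂ f (ball 0 1))
    (hmap : MapsTo f (ball 0 1) (ball 0 1)) (hF : AEStronglyMeasurable F m)
    (hF1 : ∀ᵐ z ∂m, ‖F z‖ = 1)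
    (hb : ∀ᵐ z ∂m, Tendsto (fun r : ℝ => f (r * z)) (𝓝[<] 1) (𝓝 (F z)))
    {w : ℂ} (hw : ‖w‖ < 1) (a : ℕ) :
    ∫ z, reKernel w z * F z ^ a ∂m = (f w ^ a + f 0 ^ a) / 2 := by
  obtain ⟨h1, h2⟩ := integral_cauchyKernel_mul_boundary (g := fun z => f z ^ a)
    (b := fun z => F z ^ a) (hf.pow a)
    (fun z hz => by
      have : ‖f z‖ < 1 := by simpa using hmap hz
      rw [norm_pow]
      exact pow_le_one₀ (norm_nonneg _) this.le)
    (hb.mono fun z hz => hz.pow a) hw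
  have hint : ∀ K : ℂ → ℂ, Measurable K → (∀ z : ℂ, ‖z‖ = 1 → ‖K z‖ ≤ (1 - ‖w‖)⁻¹) →
      Integrable (fun z => K z * F z ^ a) m := by
    intro K hK hKb
    refine Integrable.of_bound (C := (1 - ‖w‖)⁻¹) (hK.aestronglyMeasurable.mul (hF.pow a)) ?_
    filter_upwards [ae_norm_eq_one, hF1] with z hz hz1
    simpa [hz1] using hKb z hz
  rw [← h1, ← h2, ← integral_add, ← integral_div]
  · refine integral_congr_ae (ae_of_all _ fun z => ?_)
    simp only [reKernel_eq]
    ring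
  · exact hint _ (measurable_cauchyKernel w) fun z hz => norm_cauchyKernel_le hw hz
  · exact hint _ (Complex.continuous_conj.measurable.comp (measurable_cauchyKernel w))
      fun z hz => by simpa using norm_cauchyKernel_le hw hz

lemma integral_reKernel_mul_pow {w : ℂ} (hw : ‖w‖ < 1) (a : ℕ) :
    ∫ z, reKernel w z * z ^ a ∂m = (w ^ a + 0 ^ a) / 2 := by
  refine integral_reKernel_mul_boundary_pow (f := id) (F := id) differentiableOn_id
    (mapsTo_id _) aestronglyMeasurable_id ae_norm_eq_one (ae_of_all _ fun z => ?_) hw a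
  have : ContinuousAt (fun r : ℝ => (r : ℂ) * z) 1 := by fun_prop
  simpa using this.tendsto.mono_left nhdsWithin_le_nhds

lemma ae_kernelMeasure {w : ℂ} : ∀ᵐ z ∂kernelMeasure w, ‖z‖ = 1 :=
  (withDensity_absolutelyContinuous _ _).ae_le ae_norm_eq_one

namespace IsInnerPair

variable {f F : ℂ → ℂ}

lemma norm_apply_lt_one (h : IsInnerPair f F) {w : ℂ} (hw : ‖w‖ < 1) : ‖f w‖ < 1 := by
  simpa using h.mapsTo (x := w) (by simpa using hw)

/-- Löwner's lemma: harmonic measures are transported by inner functions. -/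
lemma map_kernelMeasure (h : IsInnerPair f F) {w : ℂ} (hw : ‖w‖ < 1) :
    (kernelMeasure w).map F = kernelMeasure (f w) := by
  have hfw := h.norm_apply_lt_one hw
  have := isFiniteMeasure_kernelMeasure hw
  have := isFiniteMeasure_kernelMeasure hfw
  refine measure_ext_of_moments ?_ ae_kernelMeasure fun a => ?_
  · rw [ae_map_iff h.measurable.aemeasurable
      (measurableSet_eq_fun (by fun_prop) (by fun_prop))]
    exact ae_of_all _ h.norm_eq_one
  · rw [integral_map h.measurable.aemeasurable (by fun_prop), integral_kernelMeasure hw,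
      integral_kernelMeasure hfw, integral_reKernel_mul_boundary_pow h.differentiableOn h.mapsTo
        h.measurable.aestronglyMeasurable (ae_of_all _ h.norm_eq_one) h.boundary hw a,
      integral_reKernel_mul_pow hfw, h.map_zero]

lemma measurePreserving (h : IsInnerPair f F) : MeasurePreserving F m m :=
  ⟨h.measurable, by
    simpa [kernelMeasure_zero, h.map_zero] using h.map_kernelMeasure (w := 0) (by simp)⟩

lemma integral_reKernel_mul_comp_iterate (h : IsInnerPair f F) {G : ℂ → ℂ} (hG : Measurable G)
    (N : ℕ) {w : ℂ} (hw : ‖w‖ < 1) :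
    ∫ z, reKernel w z * G (F^[N] z) ∂m = ∫ z, reKernel (f^[N] w) z * G z ∂m := by
  induction N generalizing w with
  | zero => simp
  | succ N ih =>
    have hfw := h.norm_apply_lt_one hw
    rw [Function.iterate_succ_apply, ← ih hfw, ← integral_kernelMeasure hw,
      ← integral_kernelMeasure hfw, ← h.map_kernelMeasure hw,
      integral_map (f := fun z => G (F^[N] z)) h.measurable.aemeasurable
        (hG.comp (h.measurable.iterate N)).aestronglyMeasurable]
    simp only [Function.iterate_succ_apply]

end IsInnerPair

/-- The `l`-th Fourier coefficient of a function on the unit circle. -/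
noncomputable def fourierCoef (G : ℂ → ℂ) (l : ℤ) : ℂ := ∫ z, z ^ (-l) * G z ∂m

lemma conj_eq_inv {z : ℂ} (hz : ‖z‖ = 1) : conj z = z⁻¹ := by
  rw [Complex.inv_def, Complex.normSq_eq_norm_sq, hz]; simp

lemma norm_fourierCoef_le {G : ℂ → ℂ} (hG : ∀ᵐ z ∂m, ‖G z‖ ≤ 1) (l : ℤ) :
    ‖fourierCoef G l‖ ≤ 1 := by
  have := norm_integral_le_of_norm_le_const (μ := m) (f := fun z => z ^ (-l) * G z) (C := 1) ?_
  · simpa [fourierCoef] using this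
  · filter_upwards [ae_norm_eq_one, hG] with z hz hz'
    simpa [hz] using hz'

lemma hasSum_geometric_succ {u : ℂ} (hu : ‖u‖ < 1) :
    HasSum (fun i : ℕ => u ^ (i + 1)) ((1 - u)⁻¹ - 1) := by
  have := (hasSum_nat_add_iff' (f := fun i : ℕ => u ^ i) 1).2 (hasSum_geometric_of_norm_lt_one hu)
  rwa [Finset.sum_range_one, pow_zero] at this

/-- If the Fourier coefficients of `G` are at most `B * r ^ (-|l|)`, then the transform of `G`
against `reKernel` varies slowly near the origin. -/
lemma norm_integral_reKernel_sub_le {G : ℂ → ℂ} (hG : Measurable G) (hG1 : ∀ᵐ z ∂m, ‖G z‖ ≤ 1)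
    {r B : ℝ} (hr : 0 < r) (hr1 : r ≤ 1)
    (hB : ∀ l : ℤ, l ≠ 0 → ‖fourierCoef G l‖ * r ^ l.natAbs ≤ B) {w : ℂ} (hw : ‖w‖ ≤ r / 2) :
    ‖∫ z, reKernel w z * G z ∂m - ∫ z, G z ∂m‖ ≤ 2 * B * (‖w‖ / r) := by
  have hw1 : ‖w‖ < 1 := by linarith
  set T : ℕ → ℂ → ℂ := fun i z =>
    (w ^ (i + 1) / 2) * (z ^ (-((i + 1 : ℕ) : ℤ)) * G z) +
      (conj w ^ (i + 1) / 2) * (z ^ (-(-((i + 1 : ℕ) : ℤ))) * G z) with hT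
  have hzG : ∀ l : ℤ, Integrable (fun z => z ^ (-l) * G z) m := by
    intro l
    refine Integrable.of_bound (C := 1) (by fun_prop) ?_
    filter_upwards [ae_norm_eq_one, hG1] with z hz hz'
    simpa [hz] using hz'
  have hTint : ∀ i, Integrable (T i) m := fun i =>
    ((hzG _).const_mul _).add ((hzG _).const_mul _)
  have hTle : ∀ i, ∀ᵐ z ∂m, ‖T i z‖ ≤ ‖w‖ ^ (i + 1) := by
    intro i
    filter_upwards [ae_norm_eq_one, hG1] with z hz hz'
    refine (norm_add_le _ _).trans ?_
    simp only [norm_mul, norm_div, norm_pow, norm_zpow, hz, one_zpow, RCLike.norm_conj, one_mul,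
      Complex.norm_ofNat]
    nlinarith [pow_nonneg (norm_nonneg w) (i + 1), norm_nonneg (G z)]
  have hgeo : Summable fun i : ℕ => ‖w‖ ^ (i + 1) :=
    (summable_nat_add_iff 1).2 (summable_geometric_of_lt_one (norm_nonneg _) hw1)
  have hsum := hasSum_integral_of_summable_integral_norm hTint
    (Summable.of_nonneg_of_le (fun i => integral_nonneg fun x => norm_nonneg _) (fun i => by
      calc ∫ x, ‖T i x‖ ∂m ≤ ∫ _, ‖w‖ ^ (i + 1) ∂m :=
            integral_mono_ae (hTint i).norm (integrable_const _) (hTle i)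
        _ = ‖w‖ ^ (i + 1) := by simp) hgeo)
  have hpt : ∀ᵐ z ∂m, ∑' i, T i z = reKernel w z * G z - G z := by
    filter_upwards [ae_norm_eq_one] with z hz
    have h1 := hasSum_geometric_succ (u := conj z * w) (by simpa [hz] using hw1)
    have h2 := hasSum_geometric_succ (u := z * conj w) (by simpa [hz] using hw1)
    have h3 := ((h1.add h2).mul_left (1 / 2)).mul_right (G z)
    have hk : conj (cauchyKernel w z) = (1 - z * conj w)⁻¹ := by simp [cauchyKernel]
    rw [reKernel_eq, hk, cauchyKernel]
    have hTz : (fun i => T i z) = fun i : ℕ =>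
        1 / 2 * ((conj z * w) ^ (i + 1) + (z * conj w) ^ (i + 1)) * G z := by
      funext i
      simp only [hT, neg_neg, zpow_neg, zpow_natCast, mul_pow, conj_eq_inv hz, inv_pow]
      ring
    rw [hTz, h3.tsum_eq]
    ring
  have hκ : Integrable (fun z => reKernel w z * G z) m := by
    refine Integrable.of_bound (C := (1 - ‖w‖)⁻¹)
      ((Complex.measurable_ofReal.comp (measurable_reKernel w)).mul hG).aestronglyMeasurable ?_
    filter_upwards [ae_norm_eq_one, hG1] with z hz hz'
    rw [norm_mul, Complex.norm_real, Real.norm_eq_abs]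
    have := abs_reKernel_le hw1 hz
    nlinarith [abs_nonneg (reKernel w z)]
  have hG0 : Integrable G m := by simpa using hzG 0
  rw [← integral_sub hκ hG0, ← integral_congr_ae hpt, ← hsum.tsum_eq]
  set x := ‖w‖ / r with hx
  have hx0 : 0 ≤ x := by positivity
  have hx2 : x ≤ 1 / 2 := by rw [hx, div_le_iff₀ hr]; linarith
  have hB0 : 0 ≤ B := le_trans (by positivity) (hB 1 one_ne_zero)
  have hbd : HasSum (fun i : ℕ => B * x * x ^ i) (B * x * (1 - x)⁻¹) :=
    (hasSum_geometric_of_lt_one hx0 (by linarith)).mul_left _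
  refine (tsum_of_norm_bounded hbd fun i => ?_).trans ?_
  · rw [integral_add ((hzG _).const_mul _) ((hzG _).const_mul _), integral_const_mul,
      integral_const_mul]
    change ‖_ * fourierCoef G _ + _ * fourierCoef G _‖ ≤ _
    refine (norm_add_le _ _).trans ?_
    have h1 := hB ((i + 1 : ℕ) : ℤ) (by positivity)
    have h2 := hB (-((i + 1 : ℕ) : ℤ)) (neg_ne_zero.2 (by positivity))
    rw [Int.natAbs_neg] at h2
    rw [Int.natAbs_natCast] at h1 h2
    have hwx : ‖w‖ = x * r := by rw [hx]; field_simp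
    simp only [norm_mul, norm_div, norm_pow, RCLike.norm_conj, Complex.norm_ofNat]
    rw [hwx, mul_pow]
    have hxp : 0 ≤ x ^ (i + 1) := by positivity
    calc _ = x ^ (i + 1) / 2 * (‖fourierCoef G ((i + 1 : ℕ) : ℤ)‖ * r ^ (i + 1)) +
          x ^ (i + 1) / 2 * (‖fourierCoef G (-((i + 1 : ℕ) : ℤ))‖ * r ^ (i + 1)) := by ring
      _ ≤ x ^ (i + 1) / 2 * B + x ^ (i + 1) / 2 * B := by gcongr
      _ = B * x * x ^ i := by ring
  · have : (1 - x)⁻¹ ≤ 2 := by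
      rw [inv_le_comm₀ (by linarith) two_pos]; linarith
    calc B * x * (1 - x)⁻¹ ≤ B * x * 2 := by gcongr
      _ = 2 * B * x := by ring

lemma reKernel_mul_symm (r : ℝ) (x z : ℂ) : reKernel (r * x) z = reKernel (r * z) x := by
  have : cauchyKernel (r * x) z = conj (cauchyKernel (r * z) x) := by
    simp only [cauchyKernel, map_inv₀, map_sub, map_mul, map_one, Complex.conj_conj,
      Complex.conj_ofReal]
    congr 2
    ring
  rw [reKernel, reKernel, this, Complex.conj_re]

lemma integral_zpow_mul_reKernel {r : ℝ} (hr : 0 < r) (hr1 : r < 1) {l : ℤ} (hl : l ≠ 0) {z : ℂ}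
    (hz : ‖z‖ = 1) :
    ∫ x, x ^ (-l) * (reKernel (r * x) z : ℂ) ∂m = (r : ℂ) ^ l.natAbs * z ^ (-l) / 2 := by
  have hrz : ‖(r : ℂ) * z‖ < 1 := by simpa [hz, abs_of_pos hr] using hr1
  simp only [reKernel_mul_symm r _ z]
  obtain ⟨a, rfl | rfl⟩ := l.eq_nat_or_neg
  · have ha : a ≠ 0 := by rintro rfl; simp at hl
    have := congrArg conj (integral_reKernel_mul_pow hrz a)
    rw [← integral_conj] at this
    rw [integral_congr_ae (g := fun x => conj (reKernel (r * z) x * x ^ a))]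
    · rw [this]
      simp [ha, mul_pow, conj_eq_inv hz, map_ofNat]
    · filter_upwards [ae_norm_eq_one] with x hx
      simp [conj_eq_inv hx, mul_comm]
  · have ha : a ≠ 0 := by rintro rfl; simp at hl
    have := integral_reKernel_mul_pow hrz a
    simpa [ha, mul_pow, mul_comm] using this

lemma integral_zpow {l : ℤ} (hl : l ≠ 0) : ∫ z, z ^ (-l) ∂m = 0 := by
  obtain ⟨a, rfl | rfl⟩ := l.eq_nat_or_neg
  · have ha : a ≠ 0 := by rintro rfl; simp at hl
    have := congrArg conj (integral_reKernel_mul_pow (w := 0) (by simp) a)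
    rw [← integral_conj] at this
    rw [integral_congr_ae (g := fun x => conj (reKernel 0 x * x ^ a))]
    · rw [this]; simp [ha]
    · filter_upwards [ae_norm_eq_one] with x hx
      simp [conj_eq_inv hx, reKernel_zero]
  · have ha : a ≠ 0 := by rintro rfl; simp at hl
    simpa [reKernel_zero, ha] using integral_reKernel_mul_pow (w := 0) (by simp) a

lemma measurable_reKernel_uncurry (r : ℝ) :
    Measurable fun p : ℂ × ℂ => (reKernel (r * p.1) p.2 : ℂ) := by
  unfold reKernel cauchyKernel
  have : Measurable fun z : ℂ => conj z := Complex.continuous_conj.measurable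
  fun_prop

/-- Fourier coefficients are controlled by the oscillation of the `reKernel` transform on a
circle. -/
lemma norm_fourierCoef_mul_le {H : ℂ → ℂ} (hH : Measurable H) (hH1 : ∀ᵐ z ∂m, ‖H z‖ ≤ 1)
    {r D : ℝ} (hr : 0 < r) (hr1 : r < 1)
    (hD : ∀ w : ℂ, ‖w‖ = r → ‖∫ z, reKernel w z * H z ∂m - ∫ z, H z ∂m‖ ≤ D) {l : ℤ}
    (hl : l ≠ 0) : ‖fourierCoef H l‖ * r ^ l.natAbs ≤ 2 * D := by
  have hint : Integrable (fun p : ℂ × ℂ => p.1 ^ (-l) * (reKernel (r * p.1) p.2 * H p.2))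
      (m.prod m) := by
    refine Integrable.of_bound (C := (1 - r)⁻¹) ?_ ?_
    · have := measurable_reKernel_uncurry r
      exact Measurable.aestronglyMeasurable (by fun_prop)
    · filter_upwards [Measure.quasiMeasurePreserving_fst.ae ae_norm_eq_one,
        Measure.quasiMeasurePreserving_snd.ae ae_norm_eq_one,
        Measure.quasiMeasurePreserving_snd.ae hH1] with p h1 h2 h3
      have hrp : ‖(r : ℂ) * p.1‖ = r := by simp [h1, abs_of_pos hr]
      have := abs_reKernel_le (w := r * p.1) (hrp.trans_lt hr1) h2
      rw [hrp] at this
      simp only [norm_mul, norm_zpow, h1, one_zpow, one_mul, Complex.norm_real, Real.norm_eq_abs]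
      nlinarith [abs_nonneg (reKernel (r * p.1) p.2)]
  have hswap := integral_integral_swap
    (f := fun x z => x ^ (-l) * (reKernel (r * x) z * H z)) hint
  have hright : ∫ z, ∫ x, x ^ (-l) * (reKernel (r * x) z * H z) ∂m ∂m =
      (r : ℂ) ^ l.natAbs / 2 * fourierCoef H l := by
    rw [fourierCoef, ← integral_const_mul]
    refine integral_congr_ae ?_
    filter_upwards [ae_norm_eq_one] with z hz
    simp only [← mul_assoc]
    rw [integral_mul_const, integral_zpow_mul_reKernel hr hr1 hl hz]
    ring
  have hzint : Integrable (fun x : ℂ => x ^ (-l) * ∫ z, H z ∂m) m := by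
    refine Integrable.mul_const (Integrable.of_bound (C := 1) (by fun_prop) ?_) _
    filter_upwards [ae_norm_eq_one] with z hz
    simp [hz]
  have hleft : ∫ x, ∫ z, x ^ (-l) * (reKernel (r * x) z * H z) ∂m ∂m =
      ∫ x, x ^ (-l) * (∫ z, reKernel (r * x) z * H z ∂m - ∫ z, H z ∂m) ∂m := by
    have h0 : ∫ x, x ^ (-l) * ∫ z, H z ∂m ∂m = 0 := by
      rw [integral_mul_const, integral_zpow hl, zero_mul]
    simp only [mul_sub]
    rw [integral_sub ?_ hzint, h0, sub_zero]
    · simp only [integral_const_mul]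
    · simpa only [integral_const_mul] using hint.integral_prod_left
  have hle : ‖∫ x, x ^ (-l) * (∫ z, reKernel (r * x) z * H z ∂m - ∫ z, H z ∂m) ∂m‖ ≤ D := by
    have := norm_integral_le_of_norm_le_const (μ := m) (C := D)
      (f := fun x => x ^ (-l) * (∫ z, reKernel (r * x) z * H z ∂m - ∫ z, H z ∂m)) ?_
    · simpa using this
    · filter_upwards [ae_norm_eq_one] with x hx
      rw [norm_mul, norm_zpow, hx, one_zpow, one_mul]
      exact hD _ (by simp [hx, abs_of_pos hr])
  rw [← hleft, hswap, hright, norm_mul, norm_div, norm_pow, Complex.norm_real, Real.norm_eq_abs,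
    abs_of_pos hr, Complex.norm_ofNat] at hle
  linarith

lemma norm_iterate_le_pow_mul {f : ℂ → ℂ} {δ c : ℝ} (hc0 : 0 ≤ c) (hc1 : c ≤ 1)
    (hf : ∀ w, ‖w‖ ≤ δ → ‖f w‖ ≤ c * ‖w‖) (N : ℕ) {w : ℂ} (hw : ‖w‖ ≤ δ) :
    ‖f^[N] w‖ ≤ c ^ N * ‖w‖ := by
  induction N generalizing w with
  | zero => simp
  | succ N ih =>
    have h1 := hf w hw
    have h2 : ‖f w‖ ≤ δ := h1.trans ((mul_le_of_le_one_left (norm_nonneg _) hc1).trans hw)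
    rw [Function.iterate_succ_apply, pow_succ, mul_assoc]
    exact (ih h2).trans (mul_le_mul_of_nonneg_left h1 (pow_nonneg hc0 _))

namespace IsInnerPair

variable {f F : ℂ → ℂ}

lemma norm_dslope_lt_one (h : IsInnerPair f F) (hlt : ‖deriv f 0‖ < 1) {w : ℂ} (hw : ‖w‖ < 1) :
    ‖dslope f 0 w‖ < 1 := by
  have hmaps : MapsTo f (ball 0 1) (ball (f 0) 1) := by rw [h.map_zero]; exact h.mapsTo
  have hle := Complex.norm_dslope_le_div_of_mapsTo_ball (z := w) h.differentiableOn
    (hmaps.mono_right ball_subset_closedBall) (by simpa using hw)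
  rw [div_one] at hle
  refine lt_of_le_of_ne hle fun heq => ?_
  have haff := Complex.affine_of_mapsTo_ball_of_norm_dslope_eq_div (z₀ := w) h.differentiableOn
    (hmaps.mono_right ball_subset_closedBall) (by simpa using hw) (by rw [heq, div_one])
  have hev : f =ᶠ[𝓝 0] fun z => f 0 + (z - 0) • dslope f 0 w := by
    filter_upwards [ball_mem_nhds (0 : ℂ) one_pos] with z hz using haff hz
  have hd : deriv f 0 = dslope f 0 w := by
    rw [hev.deriv_eq]
    simp
  rw [hd, heq] at hlt
  exact lt_irrefl _ hlt

lemma norm_apply_eq (h : IsInnerPair f F) (w : ℂ) : ‖f w‖ = ‖dslope f 0 w‖ * ‖w‖ := by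
  have := sub_smul_dslope f 0 w
  rw [h.map_zero, sub_zero, sub_zero] at this
  rw [← this, norm_smul, mul_comm]

lemma continuousOn_dslope (h : IsInnerPair f F) : ContinuousOn (dslope f 0) (ball 0 1) :=
  ((differentiableOn_dslope (ball_mem_nhds 0 one_pos)).2 h.differentiableOn).continuousOn

/-- Near the origin `f` contracts by any factor larger than `‖f'(0)‖`. -/
lemma exists_norm_apply_le (h : IsInnerPair f F) {b : ℝ} (hb : ‖deriv f 0‖ < b) :
    ∃ δ, 0 < δ ∧ δ ≤ 1 / 2 ∧ ∀ w, ‖w‖ ≤ δ → ‖f w‖ ≤ b * ‖w‖ := by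
  have hc : ContinuousAt (fun w => ‖dslope f 0 w‖) 0 :=
    (h.continuousOn_dslope.continuousAt (ball_mem_nhds 0 one_pos)).norm
  have hev : ∀ᶠ w in 𝓝 (0 : ℂ), ‖dslope f 0 w‖ < b :=
    hc.eventually_lt_const (by simpa [dslope_same] using hb)
  obtain ⟨δ, hδ, hδb⟩ := Metric.eventually_nhds_iff.1 hev
  refine ⟨min (δ / 2) (1 / 2), by positivity, min_le_right _ _, fun w hw => ?_⟩
  rw [h.norm_apply_eq]
  have : dist w 0 < δ := by
    rw [dist_zero_right]
    linarith [hw.trans (min_le_left _ _)]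
  exact mul_le_mul_of_nonneg_right (hδb this).le (norm_nonneg _)

/-- The iterates of `f` converge to `0` exponentially, at any rate larger than `‖f'(0)‖`. -/
lemma exists_norm_iterate_le (h : IsInnerPair f F) {b : ℝ} (hb : ‖deriv f 0‖ < b) (hb1 : b < 1) :
    ∃ C, 0 < C ∧ ∀ (N : ℕ) (w : ℂ), ‖w‖ ≤ 1 / 2 → ‖f^[N] w‖ ≤ C * b ^ N := by
  have hb0 : 0 < b := (norm_nonneg _).trans_lt hb
  obtain ⟨δ, hδ0, -, hδ⟩ := h.exists_norm_apply_le hb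
  obtain ⟨u, hu, hmax⟩ := (isCompact_closedBall (0 : ℂ) (1 / 2)).exists_isMaxOn
    ⟨0, by simp⟩ (h.continuousOn_dslope.norm.mono (closedBall_subset_ball (by norm_num)))
  have hu1 : ‖dslope f 0 u‖ < 1 :=
    h.norm_dslope_lt_one (hb.trans hb1) (lt_of_le_of_lt (by simpa using hu)
        (by norm_num : (2⁻¹ : ℝ) < 1))
  have hcontr : ∀ w, ‖w‖ ≤ 1 / 2 → ‖f w‖ ≤ ‖dslope f 0 u‖ * ‖w‖ := fun w hw => by
    rw [h.norm_apply_eq]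
    exact mul_le_mul_of_nonneg_right (hmax (mem_closedBall_zero_iff.2 hw)) (norm_nonneg _)
  obtain ⟨N₀, hN₀⟩ := exists_pow_lt_of_lt_one hδ0 hu1
  refine ⟨(b ^ N₀)⁻¹, by positivity, fun N w hw => ?_⟩
  have hle : ∀ K, ‖f^[K] w‖ ≤ ‖dslope f 0 u‖ ^ K := fun K =>
    (norm_iterate_le_pow_mul (norm_nonneg _) hu1.le hcontr K hw).trans
      (mul_le_of_le_one_right (by positivity) (by linarith))
  rw [inv_mul_eq_div, le_div_iff₀ (by positivity)]
  rcases le_total N N₀ with hN | hN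
  · have h1 : ‖f^[N] w‖ ≤ 1 := (hle N).trans (pow_le_one₀ (norm_nonneg _) hu1.le)
    calc ‖f^[N] w‖ * b ^ N₀ ≤ 1 * b ^ N₀ := by gcongr
      _ ≤ b ^ N := by rw [one_mul]; exact pow_le_pow_of_le_one hb0.le hb1.le hN
  · obtain ⟨K, rfl⟩ := Nat.exists_eq_add_of_le hN
    have h1 := norm_iterate_le_pow_mul hb0.le hb1.le hδ K ((hle N₀).trans hN₀.le)
    rw [← Function.iterate_add_apply, add_comm K] at h1
    have h2 : ‖f^[N₀] w‖ ≤ 1 := (hle N₀).trans (pow_le_one₀ (norm_nonneg _) hu1.le)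
    calc ‖f^[N₀ + K] w‖ * b ^ N₀ ≤ (b ^ K * ‖f^[N₀] w‖) * b ^ N₀ := by gcongr
      _ ≤ (b ^ K * 1) * b ^ N₀ := by gcongr
      _ = b ^ (N₀ + K) := by ring

lemma integral_comp_iterate (h : IsInnerPair f F) {G : ℂ → ℂ} (hG : Measurable G) (N : ℕ) :
    ∫ z, G (F^[N] z) ∂m = ∫ z, G z ∂m := by
  have hm := h.measurePreserving.iterate N
  conv_rhs => rw [← hm.map_eq]
  rw [integral_map hm.measurable.aemeasurable hG.aestronglyMeasurable]

lemma norm_fourierCoef_comp_mul_le (h : IsInnerPair f F) {G : ℂ → ℂ} (hG : Measurable G)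
    (hG1 : ∀ᵐ z ∂m, ‖G z‖ ≤ 1) {r B : ℝ} (hr : 0 < r) (hr1 : r ≤ 1)
    (hB : ∀ l : ℤ, l ≠ 0 → ‖fourierCoef G l‖ * r ^ l.natAbs ≤ B) {N : ℕ} {ρ e : ℝ} (hρ : 0 < ρ)
    (hρ1 : ρ < 1) (he : ∀ w, ‖w‖ = ρ → ‖f^[N] w‖ ≤ e) (her : e ≤ r / 2) {l : ℤ} (hl : l ≠ 0) :
    ‖fourierCoef (fun z => G (F^[N] z)) l‖ * ρ ^ l.natAbs ≤ 4 * B * (e / r) := by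
  have hB0 : 0 ≤ B := le_trans (by positivity) (hB 1 one_ne_zero)
  have := norm_fourierCoef_mul_le (H := fun z => G (F^[N] z)) (D := 2 * B * (e / r))
    (hG.comp (h.measurable.iterate N))
    ((h.measurePreserving.iterate N).quasiMeasurePreserving.ae hG1) hρ hρ1 ?_ hl
  · linarith
  · intro w hw
    rw [h.integral_reKernel_mul_comp_iterate hG N (hw.trans_lt hρ1), h.integral_comp_iterate hG]
    refine (norm_integral_reKernel_sub_le hG hG1 hr hr1 hB ((he w hw).trans her)).trans ?_
    have := he w hw
    gcongr

lemma fourierCoef_comp_eq_zero (h : IsInnerPair f F) (hf0 : deriv f 0 = 0) {G : ℂ → ℂ}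
    (hG : Measurable G) (hG1 : ∀ᵐ z ∂m, ‖G z‖ ≤ 1) {N : ℕ} (hN : 0 < N) {l : ℤ}
    (hl : l.natAbs = 1) : fourierCoef (fun z => G (F^[N] z)) l = 0 := by
  have hl0 : l ≠ 0 := by rintro rfl; simp at hl
  obtain ⟨N, rfl⟩ := Nat.exists_eq_succ_of_ne_zero hN.ne'
  have hschwarz : ∀ w, ‖w‖ ≤ 1 / 2 → ‖f w‖ ≤ 1 * ‖w‖ := fun w hw => by
    rw [h.norm_apply_eq]
    exact mul_le_mul_of_nonneg_right
      (h.norm_dslope_lt_one (by simp [hf0]) (by linarith)).le (norm_nonneg _)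
  have key : ∀ b : ℝ, 0 < b → b ≤ 1 → ‖fourierCoef (fun z => G (F^[N + 1] z)) l‖ ≤ 4 * b := by
    intro b hb hb1
    obtain ⟨δ, hδ0, hδ1, hδ⟩ := h.exists_norm_apply_le (b := b) (by simpa [hf0] using hb)
    have := h.norm_fourierCoef_comp_mul_le hG hG1 (r := 1) (B := 1) one_pos le_rfl
      (fun l _ => by simpa using norm_fourierCoef_le hG1 l) (N := N + 1) (ρ := δ) (e := b * δ) hδ0
      (by linarith) (fun w hw => ?_) (by nlinarith) hl0
    · rw [hl, pow_one] at this
      refine le_of_mul_le_mul_right ?_ hδ0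
      linarith
    · have h1 := hδ w hw.le
      rw [hw] at h1
      have h2 := norm_iterate_le_pow_mul zero_le_one le_rfl hschwarz N
        (w := f w) (by nlinarith)
      rw [one_pow, one_mul] at h2
      exact h2.trans h1
  by_contra hne
  have hpos : 0 < ‖fourierCoef (fun z => G (F^[N + 1] z)) l‖ := norm_pos_iff.2 hne
  have hle1 : ‖fourierCoef (fun z => G (F^[N + 1] z)) l‖ ≤ 1 :=
    norm_fourierCoef_le ((h.measurePreserving.iterate _).quasiMeasurePreserving.ae hG1) l
  have := key (‖fourierCoef (fun z => G (F^[N + 1] z)) l‖ / 8) (by positivity) (by linarith)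
  linarith

lemma ae_norm_iterate (h : IsInnerPair f F) (N : ℕ) : ∀ᵐ z ∂m, ‖F^[N] z‖ = 1 := by
  cases N with
  | zero => exact ae_norm_eq_one
  | succ N => exact ae_of_all _ fun z => by rw [Function.iterate_succ_apply']; exact h.norm_eq_one _

lemma measurable_spow (h : IsInnerPair f F) (ε : ℤ) (N : ℕ) : Measurable (spow F ε N) := by
  have := h.measurable.iterate N
  unfold spow
  split_ifs
  · exact this
  · exact Complex.continuous_conj.measurable.comp this

/-- The product of signed iterates, normalised so that the first exponent is `0`. -/
noncomputable def iterateProd (F : ℂ → ℂ) (ε : ℕ → ℤ) (n : ℕ → ℕ) (k : ℕ) (z : ℂ) : ℂ :=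
  ∏ j ∈ Finset.range k, spow F (ε j) (n j - n 0) z

lemma measurable_iterateProd (h : IsInnerPair f F) (ε : ℕ → ℤ) (n : ℕ → ℕ) (k : ℕ) :
    Measurable (iterateProd F ε n k) :=
  Finset.measurable_prod _ fun _ _ => h.measurable_spow _ _

lemma norm_iterateProd_le (h : IsInnerPair f F) (ε : ℕ → ℤ) (n : ℕ → ℕ) (k : ℕ) :
    ∀ᵐ z ∂m, ‖iterateProd F ε n k z‖ ≤ 1 := by
  filter_upwards [ae_all_iff.2 h.ae_norm_iterate] with z hz
  rw [iterateProd, norm_prod]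
  refine (Finset.prod_eq_one fun j _ => ?_).le
  unfold spow
  split_ifs <;> simp [hz]

end IsInnerPair

lemma spow_add (F : ℂ → ℂ) (ε : ℤ) (a b : ℕ) (z : ℂ) :
    spow F ε (a + b) z = spow F ε a (F^[b] z) := by
  simp [spow, Function.iterate_add_apply]

lemma fourierCoef_spow_zero_mul (F H : ℂ → ℂ) {ε : ℤ} (hε : ε = 1 ∨ ε = -1) (l : ℤ) :
    fourierCoef (fun z => spow F ε 0 z * H z) l = fourierCoef H (l - ε) := by
  refine integral_congr_ae (ae_norm_eq_one.mono fun z hz => ?_)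
  have hz0 : z ≠ 0 := by rintro rfl; simp at hz
  have : spow F ε 0 z = z ^ ε := by
    rcases hε with rfl | rfl <;> simp [spow, conj_eq_inv hz]
  simp only [this]
  rw [← mul_assoc, ← zpow_add₀ hz0]
  congr 2
  ring

namespace IsInnerPair

lemma le_of_steps {n : ℕ → ℕ} {k : ℕ} (hn : ∀ j, j + 1 < k → n j < n (j + 1)) :
    ∀ i j, i ≤ j → j < k → n i ≤ n j := by
  intro i j hij
  induction j, hij using Nat.le_induction with
  | base => simp
  | succ j _ ih => exact fun hj => (ih (by omega)).trans (hn j hj).le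

lemma iterateProd_succ (F : ℂ → ℂ) (ε : ℕ → ℤ) {n : ℕ → ℕ} {k : ℕ}
    (hn : ∀ j, j + 1 < k + 1 → n j < n (j + 1)) (hk : 0 < k) (z : ℂ) :
    iterateProd F ε n (k + 1) z = spow F (ε 0) 0 z *
      iterateProd F (fun j => ε (j + 1)) (fun j => n (j + 1)) k (F^[n 1 - n 0] z) := by
  rw [iterateProd, Finset.prod_range_succ', mul_comm, Nat.sub_self, iterateProd]
  congr 1
  refine Finset.prod_congr rfl fun j hj => ?_
  rw [← spow_add]
  have h1 := le_of_steps hn 1 (j + 1) (by omega) (by simpa using hj)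
  have h2 := hn 0 (by omega)
  congr 1
  simp only [zero_add] at h2 ⊢
  omega

variable {f F : ℂ → ℂ}

/-- The recursive estimate on the mean and on the weighted Fourier coefficients. -/
lemma iterateProd_bound (h : IsInnerPair f F) {s M : ℝ} (hs : 0 < s) (hM : 2 ≤ M)
    (hMs : 2 * s ≤ M) {q : ℕ}
    (hη : ∀ N, q < N → ∀ G : ℂ → ℂ, Measurable G → (∀ᵐ z ∂m, ‖G z‖ ≤ 1) → ∀ B : ℝ,
      (∀ l : ℤ, l ≠ 0 → ‖fourierCoef G l‖ * (1 / 2) ^ l.natAbs ≤ B) →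
      ∀ l : ℤ, l ≠ 0 →
        ‖fourierCoef (fun z => G (F^[N] z)) l‖ * (1 / 2) ^ l.natAbs ≤ s ^ 2 * B)
    (k : ℕ) (ε : ℕ → ℤ) (hε : ∀ j < k + 1, ε j = 1 ∨ ε j = -1) (n : ℕ → ℕ)
    (hn : ∀ j, j + 1 < k + 1 → n j < n (j + 1) ∧ q < n (j + 1) - n j) :
    ‖fourierCoef (iterateProd F ε n (k + 1)) 0‖ ≤ (M * s) ^ (k + 1) ∧
    ∀ l : ℤ, l ≠ 0 →
      s * (‖fourierCoef (iterateProd F ε n (k + 1)) l‖ * (1 / 2) ^ l.natAbs)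
        ≤ (M * s) ^ (k + 1) := by
  have hM0 : 0 < M := by linarith
  induction k generalizing ε n with
  | zero =>
    constructor
    · have h1 : iterateProd F ε n (0 + 1) = fun z => spow F (ε 0) 0 z * (fun _ => 1) z := by
        funext z; simp [iterateProd]
      have h2 : (0 : ℤ) - ε 0 ≠ 0 := by rcases hε 0 (by simp) with h | h <;> rw [h] <;> decide
      rw [h1, fourierCoef_spow_zero_mul F _ (hε 0 (by simp))]
      simp only [fourierCoef, mul_one]
      rw [integral_zpow h2, norm_zero]
      positivity
    · intro l _
      have h1 := norm_fourierCoef_le (h.norm_iterateProd_le ε n (0 + 1)) l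
      have h2 : ((1 : ℝ) / 2) ^ l.natAbs ≤ 1 := pow_le_one₀ (by norm_num) (by norm_num)
      have h3 : ‖fourierCoef (iterateProd F ε n (0 + 1)) l‖ * (1 / 2) ^ l.natAbs ≤ 1 :=
        mul_le_one₀ h1 (by positivity) h2
      rw [zero_add, pow_one]
      nlinarith
  | succ k ih =>
    set G := iterateProd F (fun j => ε (j + 1)) (fun j => n (j + 1)) (k + 1) with hG
    obtain ⟨ih0, ih1⟩ := ih (fun j => ε (j + 1)) (fun j hj => hε (j + 1) (by omega))
      (fun j => n (j + 1)) (fun j hj => hn (j + 1) (by omega))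
    rw [← hG] at ih0 ih1
    set X := (M * s) ^ (k + 1) with hX
    have hX0 : 0 < X := by positivity
    have hGm : Measurable G := h.measurable_iterateProd _ _ _
    have hstep := hη (n 1 - n 0) (hn 0 (by omega)).2 G hGm (h.norm_iterateProd_le _ _ _) (X / s)
      fun l hl => by rw [le_div_iff₀ hs, mul_comm]; exact ih1 l hl
    have hsX : s ^ 2 * (X / s) = s * X := by field_simp
    rw [hsX] at hstep
    have hcoef : ∀ l, fourierCoef (iterateProd F ε n (k + 1 + 1)) l =
        fourierCoef (fun z => G (F^[n 1 - n 0] z)) (l - ε 0) := fun l => by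
      rw [← fourierCoef_spow_zero_mul F _ (hε 0 (by simp))]
      congr 1
      funext z
      exact iterateProd_succ F ε (fun j hj => (hn j hj).1) (by omega) z
    have hmean : fourierCoef (fun z => G (F^[n 1 - n 0] z)) 0 = fourierCoef G 0 := by
      simpa [fourierCoef] using h.integral_comp_iterate hGm (n 1 - n 0)
    have hε0 : (ε 0).natAbs = 1 := by rcases hε 0 (by simp) with h | h <;> rw [h] <;> rfl
    have hgoal : (M * s) ^ (k + 1 + 1) = M * s * X := by rw [hX]; ring
    rw [hgoal]
    constructor
    · have h1 := hstep (0 - ε 0) (by omega)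
      have h2 : (0 - ε 0).natAbs = 1 := by omega
      rw [h2, pow_one] at h1
      rw [hcoef]
      have : 2 * (s * X) ≤ M * (s * X) := by gcongr
      linarith
    · intro l hl
      rw [hcoef]
      by_cases hl' : l - ε 0 = 0
      · rw [hl', hmean]
        have h2 : ((1 : ℝ) / 2) ^ l.natAbs ≤ 1 := pow_le_one₀ (by norm_num) (by norm_num)
        calc s * (‖fourierCoef G 0‖ * (1 / 2) ^ l.natAbs) ≤ s * (X * 1) := by gcongr
          _ ≤ M * s * X := by nlinarith [mul_pos hs hX0]
      · have h1 := hstep _ hl'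
        have h2 : ((1 : ℝ) / 2) ^ l.natAbs ≤ 2 * (1 / 2) ^ (l - ε 0).natAbs := by
          have h3 : (l - ε 0).natAbs ≤ l.natAbs + 1 := by omega
          have h4 := pow_le_pow_of_le_one (by norm_num : (0 : ℝ) ≤ 1 / 2) (by norm_num) h3
          rw [pow_succ] at h4
          linarith
        calc s * (‖fourierCoef (fun z => G (F^[n 1 - n 0] z)) (l - ε 0)‖ * (1 / 2) ^ l.natAbs)
            ≤ s * (‖fourierCoef (fun z => G (F^[n 1 - n 0] z)) (l - ε 0)‖ *
                (2 * (1 / 2) ^ (l - ε 0).natAbs)) := by gcongr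
          _ = 2 * s * (‖fourierCoef (fun z => G (F^[n 1 - n 0] z)) (l - ε 0)‖ *
                (1 / 2) ^ (l - ε 0).natAbs) := by ring
          _ ≤ 2 * s * (s * X) := by gcongr
          _ ≤ M * (s * X) := by gcongr
          _ = M * s * X := by ring

lemma integral_prod_spow (h : IsInnerPair f F) (ε : ℕ → ℤ) {n : ℕ → ℕ} {k : ℕ}
    (hn : ∀ j, j + 1 < k → n j < n (j + 1)) :
    ∫ z, ∏ j ∈ Finset.range k, spow F (ε j) (n j) z ∂m =
      fourierCoef (iterateProd F ε n k) 0 := by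
  have h1 : ∀ z, ∏ j ∈ Finset.range k, spow F (ε j) (n j) z = iterateProd F ε n k (F^[n 0] z) := by
    intro z
    refine Finset.prod_congr rfl fun j hj => ?_
    rw [← spow_add, Nat.sub_add_cancel (le_of_steps hn 0 j (by omega) (by simpa using hj))]
  simp only [h1]
  rw [h.integral_comp_iterate (h.measurable_iterateProd ε n k)]
  simp [fourierCoef]

lemma integral_prod_spow_eq_zero (h : IsInnerPair f F) (hf0 : deriv f 0 = 0) {ε : ℕ → ℤ}
    {n : ℕ → ℕ} {k : ℕ} (hε : ∀ j < k, ε j = 1 ∨ ε j = -1) (hk : 0 < k)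
    (hn : ∀ j, j + 1 < k → n j < n (j + 1)) :
    ∫ z, ∏ j ∈ Finset.range k, spow F (ε j) (n j) z ∂m = 0 := by
  rw [h.integral_prod_spow ε hn]
  have hε0 := hε 0 hk
  have hnat : (0 - ε 0).natAbs = 1 := by rcases hε0 with h | h <;> rw [h] <;> rfl
  obtain ⟨k, rfl⟩ := Nat.exists_eq_succ_of_ne_zero hk.ne'
  rcases Nat.eq_zero_or_pos k with rfl | hk'
  · have h1 : iterateProd F ε n (Nat.succ 0) = fun z => spow F (ε 0) 0 z * (fun _ => 1) z := by
      funext z; simp [iterateProd]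
    rw [h1, fourierCoef_spow_zero_mul F _ hε0]
    simp only [fourierCoef, mul_one]
    exact integral_zpow (by omega)
  · have h1 : iterateProd F ε n (k + 1) = _ := funext fun z => iterateProd_succ F ε hn hk' z
    rw [Nat.succ_eq_add_one, h1, fourierCoef_spow_zero_mul F
      (fun z => iterateProd F (fun j => ε (j + 1)) (fun j => n (j + 1)) k (F^[n 1 - n 0] z)) hε0]
    have h2 := hn 0 (by omega)
    exact h.fourierCoef_comp_eq_zero hf0 (h.measurable_iterateProd _ _ _)
      (h.norm_iterateProd_le _ _ _) (by simpa using h2) hnat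

lemma correlation_bound (h : IsInnerPair f F) (hlt : ‖deriv f 0‖ < 1) :
    ∃ C : ℝ, 0 < C ∧ ∃ q₀ : ℕ, 0 < q₀ ∧ ∀ q : ℕ, q₀ ≤ q → ∀ k : ℕ, 1 ≤ k →
      ∀ ε : ℕ → ℤ, (∀ j < k, ε j = 1 ∨ ε j = -1) →
      ∀ n : ℕ → ℕ, (∀ j : ℕ, j + 1 < k → n j < n (j + 1) ∧ q < n (j + 1) - n j) →
        ‖∫ z, ∏ j ∈ Finset.range k, spow F (ε j) (n j) z ∂m‖
          ≤ C ^ k * ‖deriv f 0‖ ^ (((k * q : ℕ) : ℝ) / 4) := by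
  rcases eq_or_ne (deriv f 0) 0 with hf0 | hf0
  · refine ⟨1, one_pos, 1, one_pos, fun q _ k hk ε hε n hn => ?_⟩
    rw [h.integral_prod_spow_eq_zero hf0 hε hk fun j hj => (hn j hj).1, norm_zero]
    positivity
  set a := ‖deriv f 0‖ with ha
  have ha0 : 0 < a := norm_pos_iff.2 hf0
  have hab : a < √a := by
    rw [Real.lt_sqrt ha0.le]
    nlinarith
  have hb0 : 0 < √a := Real.sqrt_pos.2 ha0
  have hb1 : √a < 1 := by rw [Real.sqrt_lt' one_pos]; simpa using hlt
  obtain ⟨C, hC, hCN⟩ := h.exists_norm_iterate_le hab hb1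
  obtain ⟨q₀, hq₀⟩ := exists_pow_lt_of_lt_one (show 0 < 1 / (4 * C) by positivity) hb1
  set t := √(8 * C) with ht
  have ht0 : 0 < t := Real.sqrt_pos.2 (by positivity)
  refine ⟨(2 + 2 * t) * t, by positivity, q₀ + 1, by omega, fun q hq k hk ε hε n hn => ?_⟩
  have hs0 : 0 < a ^ ((q : ℝ) / 4) := by positivity
  have hs1 : a ^ ((q : ℝ) / 4) ≤ 1 := Real.rpow_le_one ha0.le hlt.le (by positivity)
  have hs2 : (t * a ^ ((q : ℝ) / 4)) ^ 2 = 8 * (C * √a ^ q) := by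
    rw [mul_pow, ht, Real.sq_sqrt (by positivity), ← Real.rpow_natCast (a ^ ((q : ℝ) / 4)),
      ← Real.rpow_mul ha0.le, Real.sqrt_eq_rpow, ← Real.rpow_natCast (a ^ (1 / 2 : ℝ)),
      ← Real.rpow_mul ha0.le, mul_assoc]
    congr 3
    push_cast
    ring
  have hsmall : C * √a ^ q ≤ 1 / 2 / 2 := by
    have h1 : √a ^ q ≤ √a ^ q₀ := pow_le_pow_of_le_one hb0.le hb1.le (by omega)
    have h2 := mul_le_mul_of_nonneg_left (h1.trans hq₀.le) hC.le
    have h3 : C * (1 / (4 * C)) = 1 / 4 := by field_simp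
    linarith
  obtain ⟨k, rfl⟩ := Nat.exists_eq_add_of_le' hk
  have hbound := (h.iterateProd_bound (s := t * a ^ ((q : ℝ) / 4)) (M := 2 + 2 * t) (q := q)
    (by positivity) (by linarith) (by nlinarith) ?_ k ε hε n hn).1
  · rw [h.integral_prod_spow ε fun j hj => (hn j hj).1]
    refine hbound.trans_eq ?_
    rw [← mul_assoc, mul_pow, ← Real.rpow_natCast (a ^ ((q : ℝ) / 4)), ← Real.rpow_mul ha0.le]
    congr 2
    push_cast
    ring
  · intro N hN G hG hG1 B hB l hl
    refine (h.norm_fourierCoef_comp_mul_le hG hG1 (by norm_num) (by norm_num) hB (ρ := 1 / 2)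
      (by norm_num) (by norm_num) (fun w hw => ?_) hsmall hl).trans_eq ?_
    · refine (hCN N w hw.le).trans ?_
      exact mul_le_mul_of_nonneg_left (pow_le_pow_of_le_one hb0.le hb1.le hN.le) hC.le
    · rw [hs2]; ring

end IsInnerPair

lemma aemeasurable_boundary {f F : ℂ → ℂ} (hf : DifferentiableOn ℂ f (ball 0 1))
    (hb : ∀ᵐ z ∂m, Tendsto (fun r : ℝ => f (r * z)) (𝓝[<] 1) (𝓝 (F z))) : AEMeasurable F m := by
  obtain ⟨u, -, hu, hlim⟩ := exists_seq_strictMono_tendsto' (zero_lt_one (α := ℝ))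
  have hu' : Tendsto u atTop (𝓝[<] 1) :=
    tendsto_nhdsWithin_iff.2 ⟨hlim, Eventually.of_forall fun i => (hu i).2⟩
  refine aemeasurable_of_tendsto_metrizable_ae' (f := fun i z => f (u i * z)) (fun i => ?_)
    (hb.mono fun z hz => hz.comp hu')
  refine (aestronglyMeasurable_of_continuousOn ?_).aemeasurable
  have := (diffContOnCl_comp_mul hf (hu i).1.le (hu i).2).2
  rw [closure_ball _ one_ne_zero] at this
  exact this.mono sphere_subset_closedBall

/-- Boundary values of an inner function agree almost everywhere with measurable unimodular
ones. -/
lemma exists_isInnerPair {f F : ℂ → ℂ} (hf : DifferentiableOn ℂ f (ball 0 1))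
    (hmap : MapsTo f (ball 0 1) (ball 0 1)) (h0 : f 0 = 0)
    (hb : ∀ᵐ z ∂m, Tendsto (fun r : ℝ => f (r * z)) (𝓝[<] 1) (𝓝 (F z)))
    (hF : ∀ᵐ z ∂m, ‖F z‖ = 1) : ∃ F', IsInnerPair f F' ∧ F =ᵐ[m] F' := by
  have hm := aemeasurable_boundary hf hb
  set F₀ := hm.mk F
  have hF₀ : Measurable F₀ := hm.measurable_mk
  have heq : F =ᵐ[m] fun z => if ‖F₀ z‖ = 1 then F₀ z else 1 := by
    filter_upwards [hm.ae_eq_mk, hF] with z hz hz1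
    rw [hz] at hz1 ⊢
    exact (if_pos hz1).symm
  refine ⟨_, ⟨hf, hmap, h0, Measurable.ite
    (measurableSet_eq_fun hF₀.norm measurable_const) hF₀ measurable_const, fun z => ?_, ?_⟩, heq⟩
  · split_ifs with h
    · exact h
    · simp
  · filter_upwards [hb, heq] with z hz hz'
    rwa [← hz']

lemma iterate_ae_eq {F F' : ℂ → ℂ} (hF' : MeasurePreserving F' m m) (h : F =ᵐ[m] F') (N : ℕ) :
    F^[N] =ᵐ[m] F'^[N] := by
  induction N with
  | zero => rfl
  | succ N ih =>
    filter_upwards [h, hF'.quasiMeasurePreserving.ae ih] with z hz hz'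
    rw [Function.iterate_succ_apply, Function.iterate_succ_apply, hz, hz']

end InnerFunction

theorem stmt18 (f F : ℂ → ℂ)
    (hf : DifferentiableOn ℂ f (Metric.ball 0 1))
    (hmap : Set.MapsTo f (Metric.ball 0 1) (Metric.ball 0 1))
    (h0 : f 0 = 0)
    (hbd : ∀ᵐ z ∂m, Filter.Tendsto (fun r : ℝ => f ((r : ℂ) * z))
      (nhdsWithin 1 (Set.Iio 1)) (nhds (F z)))
    (hinner : ∀ᵐ z ∂m, ‖F z‖ = 1)
    (hlt : ‖deriv f 0‖ < 1) :
    ∃ C : ℝ, 0 < C ∧ ∃ q₀ : ℕ, 0 < q₀ ∧ ∀ q : ℕ, q₀ ≤ q → ∀ k : ℕ, 1 ≤ k → k ≤ q →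
      ∀ ε : ℕ → ℤ, (∀ j < k, ε j = 1 ∨ ε j = -1) →
      ∀ n : ℕ → ℕ, (∀ j < k, 0 < n j) →
        (∀ j : ℕ, j + 1 < k → n j < n (j + 1) ∧ q < n (j + 1) - n j) →
        ‖∫ z, ∏ j ∈ Finset.range k, spow F (ε j) (n j) z ∂m‖
          ≤ C ^ k * (Nat.factorial k : ℝ) * ‖deriv f 0‖ ^ (((k * q : ℕ) : ℝ) / 4) := by
  obtain ⟨F', h, hFF'⟩ := InnerFunction.exists_isInnerPair hf hmap h0 hbd hinner
  obtain ⟨C, hC, q₀, hq₀, hmain⟩ := h.correlation_bound hlt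
  refine ⟨C, hC, q₀, hq₀, fun q hq k hk _ ε hε n _ hn => ?_⟩
  have hcongr : ∀ᵐ z ∂m, ∏ j ∈ Finset.range k, spow F (ε j) (n j) z =
      ∏ j ∈ Finset.range k, spow F' (ε j) (n j) z := by
    filter_upwards [ae_all_iff.2 (InnerFunction.iterate_ae_eq h.measurePreserving hFF')] with z hz
    simp only [spow, hz]
  rw [integral_congr_ae hcongr]
  refine (hmain q hq k hk ε hε n hn).trans ?_
  have hfac : (1 : ℝ) ≤ k.factorial := by exact_mod_cast k.factorial_pos
  gcongr
  exact le_mul_of_one_le_right (by positivity) hfac
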